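/- Let α be a type and let A and B be palindromic lists over α. Let n ≥ 1 be such that d(n) is even, write T(n) = (Λ_1, …, Λ_N), and set s = d(n)/2. Then the concatenation Λ_{s+1} ⊕ Λ_{s+2} ⊕ … ⊕ Λ_N ⊕ Λ_1 ⊕ … ⊕ Λ_s is a palindromic list (i.e., the concatenation of the entries of the block list T(n) rotated by d(n)/2 blocks equals its own reverse). -/

import Mathlib

/-- Stern's diatomic sequence. -/
def stern : ℕ → ℕ
  | 0 => 0
  | 1 => 1
  | n + 2 =>
    if (n + 2) % 2 = 0 then stern ((n + 2) / 2)
    else stern ((n + 2) / 2) + stern ((n + 2) / 2 + 1)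
decreasing_by all_goals omega

/-- OEIS A003602: a(1)=1, a(2n)=a(n), a(2n+1)=n+1. (a(0)=0 as junk value.) -/
def aseq : ℕ → ℕ
  | 0 => 0
  | 1 => 1
  | n + 2 =>
    if (n + 2) % 2 = 0 then aseq ((n + 2) / 2)
    else (n + 2) / 2 + 1
decreasing_by all_goals omega

-- the modified sequence `a*`: zero at powers of two.
open Classical in
noncomputable def aStar (j : ℕ) : ℕ :=
  if ∃ k, j = 2 ^ k then 0 else aseq j

theorem aseq_le (n : ℕ) : aseq n ≤ n := by
  induction n using Nat.strong_induction_on with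
  | _ n ih =>
    match n with
    | 0 => simp [aseq]
    | 1 => simp [aseq]
    | m + 2 =>
      rw [aseq]
      split
      · exact le_trans (ih ((m + 2) / 2) (by omega)) (by omega)
      · omega

theorem aStar_le (j : ℕ) : aStar j ≤ j := by
  unfold aStar
  split
  · omega
  · exact aseq_le j

/-- The Markov-type sequence `S_{A,B}(n)`. -/
noncomputable def mseq {α : Type*} (A B : List α) : ℕ → List α
  | 0 => A
  | 1 => B
  | 2 => A ++ B
  | n + 3 =>
    if (n + 3) % 2 = 0 then
      mseq A B ((n + 3) / 2) ++ mseq A B (aseq ((n + 3) / 2))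
    else
      mseq A B (aStar ((n + 4) / 2 - 1)) ++ mseq A B ((n + 4) / 2)
decreasing_by
  all_goals first
    | omega
    | exact lt_of_le_of_lt (aseq_le _) (by omega)
    | exact lt_of_le_of_lt (aStar_le _) (by omega)

/-- The block decomposition `T(n)` of `S_{A,B}(n)`. -/
noncomputable def blockSeq {α : Type*} (A B : List α) : ℕ → List (List α)
  | 0 => [A]
  | 1 => [B]
  | 2 => [A, B]
  | n + 3 =>
    if (n + 3) % 2 = 0 then
      blockSeq A B ((n + 3) / 2) ++ blockSeq A B (aseq ((n + 3) / 2))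
    else
      blockSeq A B (aStar ((n + 4) / 2 - 1)) ++ blockSeq A B ((n + 4) / 2)
decreasing_by
  all_goals first
    | omega
    | exact lt_of_le_of_lt (aseq_le _) (by omega)
    | exact lt_of_le_of_lt (aStar_le _) (by omega)

theorem stern_even (j : ℕ) (hj : 1 ≤ j) : stern (2 * j) = stern j := by
  obtain ⟨k, rfl⟩ : ∃ k, j = k + 1 := ⟨j - 1, by omega⟩
  rw [show 2 * (k + 1) = 2 * k + 2 by ring, stern, if_pos (by omega)]
  congr 1; omega

theorem stern_odd (j : ℕ) (hj : 2 ≤ j) : stern (2 * j - 1) = stern (j - 1) + stern j := by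
  obtain ⟨k, rfl⟩ : ∃ k, j = k + 2 := ⟨j - 2, by omega⟩
  rw [show 2 * (k + 2) - 1 = 2 * k + 1 + 2 by omega, stern, if_neg (by omega)]
  congr 2 <;> omega

theorem aseq_even (j : ℕ) (hj : 1 ≤ j) : aseq (2 * j) = aseq j := by
  obtain ⟨k, rfl⟩ : ∃ k, j = k + 1 := ⟨j - 1, by omega⟩
  rw [show 2 * (k + 1) = 2 * k + 2 by ring, aseq, if_pos (by omega)]
  congr 1; omega

theorem aseq_odd (j : ℕ) (hj : 2 ≤ j) : aseq (2 * j - 1) = j := by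
  obtain ⟨k, rfl⟩ : ∃ k, j = k + 2 := ⟨j - 2, by omega⟩
  rw [show 2 * (k + 2) - 1 = 2 * k + 1 + 2 by omega, aseq, if_neg (by omega)]
  omega

theorem aStar_odd (j : ℕ) (hj : 2 ≤ j) : aStar (2 * j - 1) = j := by
  unfold aStar
  rw [if_neg, aseq_odd j hj]
  rintro ⟨k, hk⟩
  rcases k with _ | k
  · simp at hk; omega
  · rw [pow_succ] at hk; omega

theorem aStar_even (j : ℕ) (hj : 1 ≤ j) : aStar (2 * j) = aStar j := by
  unfold aStar
  have : (∃ k, 2 * j = 2 ^ k) ↔ ∃ k, j = 2 ^ k := by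
    constructor
    · rintro ⟨k, hk⟩
      rcases k with _ | k
      · exfalso; rw [pow_zero] at hk; omega
      · exact ⟨k, by rw [pow_succ] at hk; omega⟩
    · rintro ⟨k, hk⟩
      exact ⟨k + 1, by rw [pow_succ]; omega⟩
  by_cases h : ∃ k, j = 2 ^ k
  · rw [if_pos h, if_pos (this.2 h)]
  · rw [if_neg h, if_neg (fun h' => h (this.1 h')), aseq_even j hj]

theorem blockSeq_even {α : Type*} (A B : List α) (j : ℕ) (hj : 2 ≤ j) :
    blockSeq A B (2 * j) = blockSeq A B j ++ blockSeq A B (aseq j) := by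
  obtain ⟨k, rfl⟩ : ∃ k, j = k + 2 := ⟨j - 2, by omega⟩
  rw [show 2 * (k + 2) = 2 * k + 1 + 3 by ring, blockSeq, if_pos (by omega)]
  rw [show (2 * k + 1 + 3) / 2 = k + 2 by omega]

theorem blockSeq_odd {α : Type*} (A B : List α) (j : ℕ) (hj : 2 ≤ j) :
    blockSeq A B (2 * j - 1) = blockSeq A B (aStar (j - 1)) ++ blockSeq A B j := by
  obtain ⟨k, rfl⟩ : ∃ k, j = k + 2 := ⟨j - 2, by omega⟩
  rw [show 2 * (k + 2) - 1 = 2 * k + 3 by omega, blockSeq, if_neg (by omega)]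
  rw [show (2 * k + 4) / 2 = k + 2 by omega]

theorem pal_left {β : Type*} (u x : List β) (hx : x.reverse = x)
    (h : (u ++ x).reverse = u ++ x) : (u ++ (u ++ x)).reverse = u ++ (u ++ x) := by
  rw [List.reverse_append, h]
  have h2 : x ++ u.reverse = u ++ x := by rw [← h, List.reverse_append, hx]
  rw [List.append_assoc, h2]

theorem pal_right {β : Type*} (y v : List β) (hy : y.reverse = y)
    (h : (y ++ v).reverse = y ++ v) : (y ++ v ++ v).reverse = y ++ v ++ v := by
  rw [List.reverse_append, h]
  have h2 : v.reverse ++ y = y ++ v := by rw [← h, List.reverse_append, hy]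
  rw [← List.append_assoc, h2]

theorem block_inv {α : Type*} (A B : List α) (hA : A.reverse = A) (hB : B.reverse = B)
    (n : ℕ) (hn : 2 ≤ n) : ∃ u v x y : List (List α),
      blockSeq A B n = u ++ v ∧ blockSeq A B (aseq n) = v ∧ blockSeq A B (aStar (n - 1)) = u ∧
      u ++ v = x ++ y ∧ x.reverse = x ∧ y.reverse = y ∧
      (u ++ x).reverse = u ++ x ∧ (y ++ v).reverse = y ++ v ∧
      u.length = stern (n - 1) ∧ v.length = stern n ∧ x.length = v.length ∧
      (∀ l ∈ u, l.reverse = l) ∧ (∀ l ∈ v, l.reverse = l) := by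
  induction n using Nat.strong_induction_on with
  | _ n ih =>
    rcases eq_or_lt_of_le hn with rfl | h3
    · refine ⟨[A], [B], [A], [B], ?_⟩
      have h1 : aseq 2 = 1 := by simp [aseq]
      have h2 : aStar (2 - 1) = 0 := by
        unfold aStar; exact if_pos ⟨0, rfl⟩
      rw [h1, h2]
      simp [blockSeq, stern, hA, hB]
    · rcases Nat.even_or_odd' n with ⟨j, rfl | hj⟩
      · obtain ⟨u, v, x, y, h1, h2, h3, h4, h5, h6, h7, h8, h9, h10, h11, h12, h13⟩ :=
          ih j (by omega) (by omega)
        refine ⟨u ++ v, v, x, y ++ v, ?_, ?_, ?_, ?_, h5, h8, ?_, ?_, ?_, ?_, h11, ?_, h13⟩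
        · rw [blockSeq_even A B j (by omega), h1, h2]
        · rw [aseq_even j (by omega), h2]
        · rw [aStar_odd j (by omega), h1]
        · rw [h4, List.append_assoc]
        · rw [h4]; simp [h5, h6]
        · exact pal_right y v h6 h8
        · rw [stern_odd j (by omega), List.length_append, h9, h10]
        · rw [stern_even j (by omega), h10]
        · intro l hl
          rcases List.mem_append.1 hl with h | h
          · exact h12 l h
          · exact h13 l h
      · obtain ⟨i, hi, rfl⟩ : ∃ i, 2 ≤ i ∧ n = 2 * i - 1 := ⟨j + 1, by omega, by omega⟩
        obtain ⟨u, v, x, y, h1, h2, h3, h4, h5, h6, h7, h8, h9, h10, h11, h12, h13⟩ :=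
          ih i (by omega) (by omega)
        have e : 2 * i - 1 - 1 = 2 * (i - 1) := by omega
        refine ⟨u, u ++ v, u ++ x, y, ?_, ?_, ?_, ?_, h7, h6, ?_, ?_, ?_, ?_, ?_, h12, ?_⟩
        · rw [blockSeq_odd A B i hi, h1, h3]
        · rw [aseq_odd i hi, h1]
        · rw [e, aStar_even (i - 1) (by omega), h3]
        · rw [h4, List.append_assoc]
        · exact pal_left u x h5 h7
        · rw [h4]; simp [h5, h6]
        · rw [e, stern_even (i - 1) (by omega), h9]
        · rw [stern_odd i hi, List.length_append, h9, h10]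
        · simp [h11]
        · intro l hl
          rcases List.mem_append.1 hl with h | h
          · exact h12 l h
          · exact h13 l h

theorem pal_split {β : Type*} (x : List β) (s : ℕ) (hx : x.reverse = x)
    (hl : x.length = s + s) : ∃ p : List β, p.length = s ∧ x = p ++ p.reverse := by
  refine ⟨x.take s, by simp [hl], ?_⟩
  conv_lhs => rw [← List.take_append_drop s x]
  congr 1
  rw [List.reverse_take, hx, hl]
  simp

/-- if `A`, `B` are palindromic and `d(n)` is even, the concatenation of the
entries of the block list `T(n)` rotated by `d(n)/2` blocks is palindromic. -/
theorem stmt0 {α : Type*} (A B : List α) (hA : A.reverse = A) (hB : B.reverse = B)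
    (n : ℕ) (hn : 1 ≤ n) (hd : Even (stern n)) :
    (((blockSeq A B n).rotate (stern n / 2)).flatten).reverse =
      ((blockSeq A B n).rotate (stern n / 2)).flatten := by
  rcases eq_or_lt_of_le hn with rfl | h2
  · simp [stern] at hd
  obtain ⟨u, v, x, y, h1, -, -, h4, h5, h6, -, -, -, h10, h11, h12, h13⟩ :=
    block_inv A B hA hB n h2
  obtain ⟨s, hs⟩ := hd
  have hmem : ∀ l ∈ blockSeq A B n, l.reverse = l := by
    intro l hl
    rw [h1] at hl
    rcases List.mem_append.1 hl with h | h
    · exact h12 l h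
    · exact h13 l h
  obtain ⟨p, hp, rfl⟩ := pal_split x s h5 (by omega)
  have hrot : (blockSeq A B n).rotate (stern n / 2) = p.reverse ++ y ++ p := by
    rw [h1, h4, show stern n / 2 = p.length by omega, List.append_assoc,
      List.rotate_append_length_eq]
  have hmem2 : ∀ l ∈ (blockSeq A B n).rotate (stern n / 2), l.reverse = l := by
    intro l hl
    exact hmem l (List.mem_rotate.1 hl)
  rw [List.reverse_flatten, List.map_congr_left (g := id) hmem2, List.map_id, hrot]
  simp [h6]
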